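/- Cut elimination for SKS: every proof in the system SKS of a formula P can be transformed into a proof in the system KS of P; in particular the up rules ai↑, aw↑ and ac↑ are admissible for KS. -/

import Mathlib

/-!
Cut elimination is obtained semantically. Every rule of SKS preserves truth under Boolean
valuations (`SKS_sound`), so a formula provable in SKS is a tautology, and it remains to see that
KS proves every tautology.

In KS, general weakening (`weaken`) and general contraction (`contract`, by medial) are derivable.
With switch and contraction, `[(P,Q),R]` follows from `([P,R],[Q,R])`, which is distribution read
upwards; hence a formula is provable as soon as all clauses of its conjunctive normal form are
(`prove_of_clauses`). The clauses of a tautology are valid, and a valid clause contains `t` or two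
dual atoms, so it is provable by `ai↓`, weakening and contraction (`prove_clause`).
-/

/-!
Deep-inference systems SKSg, SKS and KS for classical propositional logic
(the calculus of structures).  Formulas are built from atoms `a`, their
negations `ā`, and the units `t` (true) and `f` (false) by disjunction
`[P,Q]` (`dis`) and conjunction `(P,Q)` (`con`), and are considered modulo
the congruence `Equiv` generated by associativity, commutativity and the
unit laws.  Rules apply inside an arbitrary one-hole context and modulo the
equivalence.
-/

namespace DI

/-- Formulas of the calculus of structures for classical logic:
units `t`, `f`; atoms `pos a`; negated atoms `neg a`; disjunction `dis`
(written `[P,Q]`); conjunction `con` (written `(P,Q)`). -/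
inductive F : Type where
  | tt  : F
  | ff  : F
  | pos : ℕ → F
  | neg : ℕ → F
  | dis : F → F → F
  | con : F → F → F
deriving DecidableEq

/-- Negation, pushed to the atoms by the De Morgan laws:
`¬t = f`, `¬f = t`, `¬[P,Q] = (¬P,¬Q)`, `¬(P,Q) = [¬P,¬Q]`, `¬¬P = P`. -/
def F.negF : F → F
  | .tt => .ff
  | .ff => .tt
  | .pos a => .neg a
  | .neg a => .pos a
  | .dis P Q => .con P.negF Q.negF
  | .con P Q => .dis P.negF Q.negF

/-- Atoms are the propositional symbols and their negations. -/
def F.isAtom : F → Prop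
  | .pos _ => True
  | .neg _ => True
  | _ => False

/-- Syntactic equivalence of formulas: the smallest congruence generated by
associativity and commutativity of both connectives and the unit laws
`[t,t]=t`, `(f,f)=f`, `[f,P]=P`, `(t,P)=P`. -/
inductive Equiv : F → F → Prop where
  | refl (P : F) : Equiv P P
  | symm {P Q : F} : Equiv P Q → Equiv Q P
  | trans {P Q R : F} : Equiv P Q → Equiv Q R → Equiv P R
  | disComm (P Q : F) : Equiv (.dis P Q) (.dis Q P)
  | conComm (P Q : F) : Equiv (.con P Q) (.con Q P)
  | disAssoc (P Q R : F) : Equiv (.dis (.dis P Q) R) (.dis P (.dis Q R))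
  | conAssoc (P Q R : F) : Equiv (.con (.con P Q) R) (.con P (.con Q R))
  | ttDis : Equiv (.dis .tt .tt) .tt
  | ffCon : Equiv (.con .ff .ff) .ff
  | ffDis (P : F) : Equiv (.dis .ff P) P
  | ttCon (P : F) : Equiv (.con .tt P) P
  | disCongr {P P' Q Q' : F} :
      Equiv P P' → Equiv Q Q' → Equiv (.dis P Q) (.dis P' Q')
  | conCongr {P P' Q Q' : F} :
      Equiv P P' → Equiv Q Q' → Equiv (.con P Q) (.con P' Q')

/-- One-hole contexts. -/
inductive Ctx : Type where
  | hole : Ctx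
  | disL : Ctx → F → Ctx
  | disR : F → Ctx → Ctx
  | conL : Ctx → F → Ctx
  | conR : F → Ctx → Ctx

/-- Plugging a formula into the hole of a context. -/
def Ctx.fill : Ctx → F → F
  | .hole, P => P
  | .disL C Q, P => .dis (C.fill P) Q
  | .disR Q C, P => .dis Q (C.fill P)
  | .conL C Q, P => .con (C.fill P) Q
  | .conR Q C, P => .con Q (C.fill P)

/-- Names of the inference rules of SKSg and SKS. -/
inductive Rule : Type where
  | iDown | iUp | wDown | wUp | cDown | cUp | s | m
  | aiDown | aiUp | awDown | awUp | acDown | acUp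
deriving DecidableEq

/-- The rules, read at the root of a formula (premise on the left,
conclusion on the right). -/
inductive RootStep : Rule → F → F → Prop where
  | iDown (P : F) : RootStep .iDown .tt (.dis P P.negF)
  | iUp (P : F) : RootStep .iUp (.con P P.negF) .ff
  | wDown (P : F) : RootStep .wDown .ff P
  | wUp (P : F) : RootStep .wUp P .tt
  | cDown (P : F) : RootStep .cDown (.dis P P) P
  | cUp (P : F) : RootStep .cUp P (.con P P)
  | s (P Q R : F) : RootStep .s (.con P (.dis Q R)) (.dis (.con P Q) R)
  | m (P Q R S : F) :
      RootStep .m (.dis (.con P Q) (.con R S)) (.con (.dis P R) (.dis Q S))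
  | aiDown (A : F) (h : A.isAtom) : RootStep .aiDown .tt (.dis A A.negF)
  | aiUp (A : F) (h : A.isAtom) : RootStep .aiUp (.con A A.negF) .ff
  | awDown (A : F) (h : A.isAtom) : RootStep .awDown .ff A
  | awUp (A : F) (h : A.isAtom) : RootStep .awUp A .tt
  | acDown (A : F) (h : A.isAtom) : RootStep .acDown (.dis A A) A
  | acUp (A : F) (h : A.isAtom) : RootStep .acUp A (.con A A)

/-- One inference step using a rule from the set `Rs`, applied inside an
arbitrary context and modulo the equivalence. -/
def Step (Rs : Set Rule) (P Q : F) : Prop :=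
  ∃ r ∈ Rs, ∃ (C : Ctx) (P' Q' : F),
    RootStep r P' Q' ∧ Equiv P (C.fill P') ∧ Equiv (C.fill Q') Q

/-- Derivations over an arbitrary step relation: a finite sequence of rule
instances from the premise to the conclusion (modulo the equivalence). -/
inductive Deriv (St : F → F → Prop) : F → F → Prop where
  | eqv {P Q : F} : Equiv P Q → Deriv St P Q
  | step {P Q R : F} : St P Q → Deriv St Q R → Deriv St P R

/-- The system SKSg: general (non-atomic) rules plus switch. -/
def SKSg : Set Rule := {.iDown, .iUp, .wDown, .wUp, .cDown, .cUp, .s}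

/-- The system SKS: atomic rules plus switch and medial. -/
def SKS : Set Rule := {.aiDown, .aiUp, .awDown, .awUp, .acDown, .acUp, .s, .m}

/-- The system KS: the down fragment of SKS. -/
def KS : Set Rule := {.aiDown, .awDown, .acDown, .s, .m}

/-- A proof of `Q` in the system `Rs` is a derivation from the unit `t` to `Q`. -/
def Proof (Rs : Set Rule) (Q : F) : Prop := Deriv (Step Rs) .tt Q

/-- A rule `r` is derivable from a set `Rs` of rules if every instance of `r`
(with premise `P` and conclusion `Q`) can be replaced by a derivation from
`P` to `Q` using only rules of `Rs`. -/
def RuleDerivable (r : Rule) (Rs : Set Rule) : Prop :=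
  ∀ P Q : F, Step {r} P Q → Deriv (Step Rs) P Q

end DI

namespace DI

/-- Truth of a formula under a valuation of the propositional symbols. -/
def F.Tr (v : ℕ → Prop) : F → Prop
  | .tt => True
  | .ff => False
  | .pos a => v a
  | .neg a => ¬ v a
  | .dis P Q => P.Tr v ∨ Q.Tr v
  | .con P Q => P.Tr v ∧ Q.Tr v

theorem Equiv.tr {P Q : F} (h : Equiv P Q) (v : ℕ → Prop) : P.Tr v ↔ Q.Tr v := by
  induction h <;> (try simp only [F.Tr]) <;> tauto

theorem Ctx.tr_mono (v : ℕ → Prop) (C : Ctx) {P Q : F} (h : P.Tr v → Q.Tr v) :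
    (C.fill P).Tr v → (C.fill Q).Tr v := by
  induction C <;> simp only [Ctx.fill, F.Tr] <;> tauto

theorem F.tr_negF (v : ℕ → Prop) (P : F) : P.negF.Tr v ↔ ¬ P.Tr v := by
  induction P <;> simp only [F.negF, F.Tr] <;> tauto

theorem RootStep.tr {r : Rule} {P Q : F} (v : ℕ → Prop) (hr : r ∈ SKS) (h : RootStep r P Q) :
    P.Tr v → Q.Tr v := by
  cases h <;> simp [SKS] at hr <;> simp only [F.Tr, F.tr_negF] <;> tauto

theorem SKS_sound (v : ℕ → Prop) {P Q : F} (h : Deriv (Step SKS) P Q) : P.Tr v → Q.Tr v := by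
  induction h with
  | eqv h => exact (h.tr v).1
  | step h _ ih =>
    obtain ⟨r, hr, C, P', Q', hs, h1, h2⟩ := h
    exact fun hp => ih ((h2.tr v).1 (C.tr_mono v (hs.tr v hr) ((h1.tr v).1 hp)))

/-- Derivability in KS of the second formula from the first. -/
abbrev D (P Q : F) : Prop := Deriv (Step KS) P Q

theorem Step.eqv_left {P Q R : F} (e : Equiv P Q) (h : Step KS Q R) : Step KS P R := by
  obtain ⟨r, hr, C, P', Q', hs, h1, h2⟩ := h
  exact ⟨r, hr, C, P', Q', hs, e.trans h1, h2⟩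

theorem D.trans {P Q R : F} (h : D P Q) (k : D Q R) : D P R := by
  induction h with
  | step h _ ih => exact .step h (ih k)
  | eqv e =>
    cases k with
    | eqv e' => exact .eqv (e.trans e')
    | step h k => exact .step (h.eqv_left e) k

theorem D.root {r : Rule} {P Q : F} (hr : r ∈ KS) (h : RootStep r P Q) : D P Q :=
  .step ⟨r, hr, .hole, P, Q, h, .refl _, .refl _⟩ (.eqv (.refl _))

theorem D.dis_left {P P' : F} (Q : F) (h : D P P') : D (.dis P Q) (.dis P' Q) := by
  induction h with
  | eqv e => exact .eqv (.disCongr e (.refl _))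
  | step h _ ih =>
    obtain ⟨r, hr, C, P', Q', hs, h1, h2⟩ := h
    exact .step ⟨r, hr, .disL C Q, P', Q', hs, .disCongr h1 (.refl _), .disCongr h2 (.refl _)⟩ ih

theorem D.con_left {P P' : F} (Q : F) (h : D P P') : D (.con P Q) (.con P' Q) := by
  induction h with
  | eqv e => exact .eqv (.conCongr e (.refl _))
  | step h _ ih =>
    obtain ⟨r, hr, C, P', Q', hs, h1, h2⟩ := h
    exact .step ⟨r, hr, .conL C Q, P', Q', hs, .conCongr h1 (.refl _), .conCongr h2 (.refl _)⟩ ih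

theorem D.dis {P P' Q Q' : F} (h : D P P') (k : D Q Q') : D (.dis P Q) (.dis P' Q') :=
  (h.dis_left Q).trans <| (D.trans (.eqv (.disComm _ _)) (k.dis_left P')).trans (.eqv (.disComm _ _))

theorem D.con {P P' Q Q' : F} (h : D P P') (k : D Q Q') : D (.con P Q) (.con P' Q') :=
  (h.con_left Q).trans <| (D.trans (.eqv (.conComm _ _)) (k.con_left P')).trans (.eqv (.conComm _ _))

theorem D.refl (P : F) : D P P := .eqv (.refl _)

theorem D.switch (P Q R : F) : D (.con P (.dis Q R)) (.dis (.con P Q) R) :=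
  D.root (by simp [KS]) (.s P Q R)

/-- Weakening to an arbitrary formula. Weakening to `t` is an instance of switch:
`f = (f,[t,t])` yields `[(f,t),t] = t`. -/
theorem weaken (P : F) : D .ff P := by
  induction P with
  | tt =>
    have e1 : Equiv .ff (.con .ff (.dis .tt .tt)) :=
      ((Equiv.conComm _ _).trans ((Equiv.conCongr .ttDis (.refl _)).trans (.ttCon _))).symm
    have e2 : Equiv (.dis (.con .ff .tt) .tt) .tt :=
      (Equiv.disCongr ((Equiv.conComm _ _).trans (.ttCon _)) (.refl _)).trans (.ffDis _)
    exact (D.trans (.eqv e1) (D.switch _ _ _)).trans (.eqv e2)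
  | ff => exact D.refl _
  | pos a => exact D.root (r := .awDown) (by simp [KS]) (.awDown _ trivial)
  | neg a => exact D.root (r := .awDown) (by simp [KS]) (.awDown _ trivial)
  | dis P Q hP hQ => exact D.trans (.eqv (Equiv.ffDis _).symm) (hP.dis hQ)
  | con P Q hP hQ => exact D.trans (.eqv Equiv.ffCon.symm) (hP.con hQ)

theorem Equiv.disLeftComm (P Q R : F) : Equiv (.dis P (.dis Q R)) (.dis Q (.dis P R)) :=
  (Equiv.disAssoc _ _ _).symm.trans
    ((Equiv.disCongr (.disComm _ _) (.refl _)).trans (.disAssoc _ _ _))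

/-- Contraction of an arbitrary formula, reduced to atoms by medial. -/
theorem contract (P : F) : D (.dis P P) P := by
  induction P with
  | tt => exact .eqv .ttDis
  | ff => exact .eqv (.ffDis _)
  | pos a => exact D.root (r := .acDown) (by simp [KS]) (.acDown _ trivial)
  | neg a => exact D.root (r := .acDown) (by simp [KS]) (.acDown _ trivial)
  | dis P Q hP hQ =>
    have e : Equiv (.dis (.dis P Q) (.dis P Q)) (.dis (.dis P P) (.dis Q Q)) :=
      (Equiv.disAssoc _ _ _).trans
        ((Equiv.disCongr (.refl _) (.disLeftComm _ _ _)).trans (Equiv.disAssoc _ _ _).symm)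
    exact D.trans (.eqv e) (hP.dis hQ)
  | con P Q hP hQ => exact (D.root (r := .m) (by simp [KS]) (.m P Q P Q)).trans (hP.con hQ)

theorem weaken_right (P Q : F) : D P (.dis P Q) :=
  D.trans (.eqv ((Equiv.disComm _ _).trans (.ffDis _)).symm) ((D.refl P).dis (weaken Q))

theorem weaken_left (P Q : F) : D Q (.dis P Q) :=
  (weaken_right Q P).trans (.eqv (.disComm _ _))

/-- Distributivity read upwards: switch twice, then contract the two copies of `R`. -/
theorem distrib (P Q R : F) : D (.con (.dis P R) (.dis Q R)) (.dis (.con P Q) R) := by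
  have h1 : D (.con (.dis P R) Q) (.dis (.con P Q) R) :=
    (D.trans (.eqv (.conComm _ _)) (D.switch Q P R)).trans
      (.eqv (.disCongr (.conComm _ _) (.refl _)))
  have h2 := (D.switch (.dis P R) Q R).trans (h1.dis_left R)
  exact (h2.trans (.eqv (.disAssoc _ _ _))).trans ((D.refl _).dis (contract R))

/-- `IsClause P L`: the list `L` of atoms and units is a clause of the conjunctive normal form
of `P`. -/
def IsClause : F → List F → Prop
  | .dis P Q, L => ∃ C C', IsClause P C ∧ IsClause Q C' ∧ L = C ++ C'
  | .con P Q, L => IsClause P L ∨ IsClause Q L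
  | P, L => L = [P]

/-- The disjunction of a list of formulas. -/
def disj : List F → F
  | [] => .ff
  | P :: L => .dis P (disj L)

theorem disj_append (L M : List F) : Equiv (disj (L ++ M)) (.dis (disj L) (disj M)) := by
  induction L with
  | nil => exact (Equiv.ffDis _).symm
  | cons P L ih => exact (Equiv.disCongr (.refl _) ih).trans (Equiv.disAssoc _ _ _).symm

theorem D.disj_of_mem {P : F} {L : List F} (h : P ∈ L) : D P (disj L) := by
  induction L with
  | nil => simp at h
  | cons Q L ih =>
    rcases List.mem_cons.1 h with rfl | h
    · exact weaken_right _ _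
    · exact (ih h).trans (weaken_left _ _)

/-- A formula is provable, beside any side formula `R`, once all its clauses are. -/
theorem prove_of_clauses (P : F) : ∀ R : F,
    (∀ L, IsClause P L → D .tt (.dis (disj L) R)) → D .tt (.dis P R) := by
  have base : ∀ Q R : F, D .tt (.dis (disj [Q]) R) → D .tt (.dis Q R) := fun Q R h =>
    h.trans (.eqv (.disCongr ((Equiv.disComm _ _).trans (.ffDis _)) (.refl _)))
  induction P with
  | tt => exact fun R h => base _ _ (h _ rfl)
  | ff => exact fun R h => base _ _ (h _ rfl)
  | pos a => exact fun R h => base _ _ (h _ rfl)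
  | neg a => exact fun R h => base _ _ (h _ rfl)
  | dis P Q hP hQ =>
    intro R h
    refine (hP (.dis Q R) fun C hC => ?_).trans (.eqv (Equiv.disAssoc _ _ _).symm)
    refine (hQ (.dis (disj C) R) fun C' hC' => ?_).trans (.eqv (.disLeftComm _ _ _))
    refine (h (C ++ C') ⟨C, C', hC, hC', rfl⟩).trans (.eqv ?_)
    exact (Equiv.disCongr (disj_append C C') (.refl _)).trans
      ((Equiv.disAssoc _ _ _).trans (.disLeftComm _ _ _))
  | con P Q hP hQ =>
    intro R h
    exact (D.trans (.eqv (Equiv.ttCon _).symm) ((hP R fun L hL => h L (.inl hL)).con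
      (hQ R fun L hL => h L (.inr hL)))).trans (distrib P Q R)

theorem IsClause.literal {P : F} : ∀ {L : List F}, IsClause P L →
    ∀ A ∈ L, A.isAtom ∨ A = .tt ∨ A = .ff := by
  induction P with
  | dis P Q hP hQ =>
    rintro _ ⟨C, C', hC, hC', rfl⟩ A hA
    exact (List.mem_append.1 hA).elim (hP hC A) (hQ hC' A)
  | con P Q hP hQ => exact fun h => h.elim hP hQ
  | _ => rintro _ rfl A hA; simp_all [F.isAtom]

theorem IsClause.tr {P : F} {v : ℕ → Prop} (hv : P.Tr v) : ∀ {L : List F}, IsClause P L →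
    ∃ A ∈ L, A.Tr v := by
  induction P with
  | dis P Q hP hQ =>
    rintro _ ⟨C, C', hC, hC', rfl⟩
    rcases hv with hv | hv
    · obtain ⟨A, hA, h⟩ := hP hv hC
      exact ⟨A, List.mem_append_left _ hA, h⟩
    · obtain ⟨A, hA, h⟩ := hQ hv hC'
      exact ⟨A, List.mem_append_right _ hA, h⟩
  | con P Q hP hQ => exact fun h => h.elim (hP hv.1) (hQ hv.2)
  | _ => rintro _ rfl; exact ⟨_, List.mem_singleton.2 rfl, hv⟩

/-- A valid clause is provable. -/
theorem prove_clause {L : List F} (hL : ∀ A ∈ L, A.isAtom ∨ A = .tt ∨ A = .ff)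
    (hv : ∀ v, ∃ A ∈ L, A.Tr v) : D .tt (disj L) := by
  -- Under this valuation, a true member of `L` is `t` or an atom whose dual is also in `L`.
  obtain ⟨A, hA, h⟩ := hv fun a => .neg a ∈ L
  have pair : ∀ a, F.pos a ∈ L → F.neg a ∈ L → D .tt (disj L) := fun a hp hn =>
    (D.root (r := .aiDown) (by simp [KS]) (.aiDown (.pos a) trivial)).trans
      (((D.disj_of_mem hp).dis (D.disj_of_mem hn)).trans (contract _))
  cases A with
  | tt => exact D.disj_of_mem hA
  | ff => exact h.elim
  | pos a => exact pair a hA h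
  | neg a => exact (h hA).elim
  | dis P Q => simpa [F.isAtom] using hL _ hA
  | con P Q => simpa [F.isAtom] using hL _ hA

theorem KS_complete (P : F) (h : ∀ v, P.Tr v) : Proof KS P := by
  refine (prove_of_clauses P .ff fun L hL => ?_).trans
    (.eqv ((Equiv.disComm _ _).trans (.ffDis _)))
  exact (prove_clause hL.literal fun v => hL.tr (h v)).trans (weaken_right _ _)

end DI

namespace DI

/-- cut elimination for SKS.
Every proof in the system SKS of a formula `P` can be transformed into a
proof in the system KS of `P`; in particular the up rules `ai↑`, `aw↑` and
`ac↑` are admissible for KS. -/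
theorem sks_cut_elimination (P : F) (h : Proof SKS P) : Proof KS P :=
  KS_complete P fun v => SKS_sound v h trivial

end DI
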